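/- arXiv:2404.11362 — 2 statements merged into one kernel-verified Lean document; each statement's English description precedes it below -/
import Mathlib

section
/- Let N ≥ 3, m > 0, and let f : ℝ → ℝ be continuous with f(0) = 0, lim_{s→0} f(s)/s = 0, and |f(s)| ≤ C(|s| + |s|^{(N+2)/(N-2)}) for all s and some constant C > 0. Set F(s) = ∫₀^s f(t) dt. Suppose u : ℝ^N → ℝ is continuously differentiable, u and |∇u| belong to L²(ℝ^N), F(u) ∈ L¹(ℝ^N), and u is a weak solution of −Δu + m u = f(u), i.e. ∫ ⟨∇u, ∇φ⟩ + m ∫ u φ = ∫ f(u) φ for every smooth compactly supported φ : ℝ^N → ℝ. Then u satisfies the Pohozaev identity P_m(u) = 0, where P_m(u) = ((N−2)/2) ∫ |∇u|² + (N m/2) ∫ u² − N ∫ F(u). -/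
open MeasureTheory Filter Set Real
open scoped RealInnerProductSpace

noncomputable section

/-- The primitive `F(s) = ∫₀ˢ f(t) dt`. -/
def primF (f : ℝ → ℝ) (s : ℝ) : ℝ := ∫ t in (0:ℝ)..s, f t

set_option linter.unusedSectionVars false

namespace Poho

open scoped Convolution ContDiff

variable {E : Type*} [NormedAddCommGroup E] [InnerProductSpace ℝ E] [FiniteDimensional ℝ E]
  [MeasurableSpace E] [BorelSpace E]

/-- Directional derivative. -/
def pd (e : E) (v : E → ℝ) (x : E) : ℝ := fderiv ℝ v x e

lemma pd_cont {v : E → ℝ} (hv : ContDiff ℝ 1 v) (e : E) : Continuous (pd e v) :=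
  (hv.continuous_fderiv one_ne_zero).clm_apply continuous_const

lemma pd_contDiff {v : E → ℝ} (hv : ContDiff ℝ 2 v) (e : E) : ContDiff ℝ 1 (pd e v) :=
  (hv.fderiv_right (m := 1) (by norm_num)).clm_apply contDiff_const

lemma pd_supp {v : E → ℝ} (hv : HasCompactSupport v) (e : E) : HasCompactSupport (pd e v) :=
  hv.fderiv_apply (𝕜 := ℝ) e

lemma pd_mul {a b : E → ℝ} (ha : ContDiff ℝ 1 a) (hb : ContDiff ℝ 1 b) (e x : E) :
    pd e (fun x => a x * b x) x = a x * pd e b x + pd e a x * b x := by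
  unfold pd
  rw [fderiv_fun_mul (ha.differentiable one_ne_zero x) (hb.differentiable one_ne_zero x)]
  simp [mul_comm]

lemma int_of {a b : E → ℝ} (ha : Continuous a) (hb : Continuous b) (hs : HasCompactSupport a) :
    Integrable (fun x => a x * b x) (volume : Measure E) :=
  (ha.mul hb).integrable_of_hasCompactSupport (hs.mul_right)

lemma ibp {a b : E → ℝ} (ha : ContDiff ℝ 1 a) (hb : ContDiff ℝ 1 b) (hs : HasCompactSupport a)
    (e : E) : ∫ x, a x * pd e b x = - ∫ x, pd e a x * b x := by
  unfold pd
  refine integral_mul_fderiv_eq_neg_fderiv_mul_of_integrable ?_ ?_ ?_ ?_ ?_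
  · exact int_of (pd_cont ha e) hb.continuous (pd_supp hs e)
  · exact int_of ha.continuous (pd_cont hb e) hs
  · exact int_of ha.continuous hb.continuous hs
  · exact fun x _ => ha.differentiable one_ne_zero x
  · exact fun x _ => hb.differentiable one_ne_zero x

lemma pd_symm {v : E → ℝ} (hv : ContDiff ℝ 2 v) (a b x : E) :
    pd a (pd b v) x = pd b (pd a v) x := by
  have hd : DifferentiableAt ℝ (fderiv ℝ v) x :=
    (hv.fderiv_right (m := 1) (by norm_num)).differentiable one_ne_zero x
  have key : ∀ a b : E, pd a (pd b v) x = fderiv ℝ (fderiv ℝ v) x a b := by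
    intro a b
    unfold pd
    rw [fderiv_clm_apply hd (differentiableAt_const _)]
    simp
  rw [key, key]
  exact (hv.contDiffAt.isSymmSndFDerivAt (by simp)) a b

lemma stress {v ψ : E → ℝ} (hv : ContDiff ℝ 2 v) (hψ : ContDiff ℝ 1 ψ)
    (hs : HasCompactSupport ψ) (a b : E) :
    ∫ x, ψ x * (pd b v x * pd a (pd a v) x) =
      - (∫ x, pd a ψ x * (pd b v x * pd a v x)) + 1 / 2 * ∫ x, pd b ψ x * (pd a v x * pd a v x) := by
  have hA := pd_contDiff hv a
  have hB := pd_contDiff hv b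
  have e1 := ibp (hψ.mul hB) hA hs.mul_right a
  have e2 := ibp hψ (hA.mul hA) hs b
  simp only [pd_mul hψ hB, pd_mul hA hA] at e1 e2
  have i1 : Integrable (fun x => ψ x * (pd a (pd b v) x * pd a v x)) :=
    int_of hψ.continuous ((pd_cont hB a).mul hA.continuous) hs
  have i2 : Integrable (fun x => pd a ψ x * (pd b v x * pd a v x)) :=
    int_of (pd_cont hψ a) (hB.continuous.mul hA.continuous) (pd_supp hs a)
  have e3 : ∫ x, (ψ x * pd a (pd b v) x + pd a ψ x * pd b v x) * pd a v x =
     (∫ x, ψ x * (pd a (pd b v) x * pd a v x)) + ∫ x, pd a ψ x * (pd b v x * pd a v x) := by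
    rw [← integral_add i1 i2]
    congr 1; ext x; ring
  have e4 : ∫ x, ψ x * (pd a v x * pd b (pd a v) x + pd b (pd a v) x * pd a v x) =
     2 * ∫ x, ψ x * (pd a (pd b v) x * pd a v x) := by
    rw [← integral_const_mul]
    congr 1; ext x; rw [pd_symm hv b a]; ring
  rw [e3] at e1
  rw [e4] at e2
  have e5 : ∫ x, ψ x * (pd b v x * pd a (pd a v) x) = ∫ x, ψ x * pd b v x * pd a (pd a v) x := by
    congr 1; ext x; ring
  rw [e5, e1]; linarith

/-- Mollification. -/
def mol (ρ w : E → ℝ) (x : E) : ℝ := ∫ t, ρ (x - t) * w t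

lemma mol_eq (ρ w : E → ℝ) :
    mol ρ w = (ρ ⋆[ContinuousLinearMap.lsmul ℝ ℝ, (volume : Measure E)] w) := by
  ext x
  rw [convolution_eq_swap]
  rfl

lemma mol_contDiff {ρ w : E → ℝ} (hρ : ContDiff ℝ ∞ ρ) (hs : HasCompactSupport ρ)
    (hw : Continuous w) : ContDiff ℝ ∞ (mol ρ w) := by
  rw [mol_eq]
  exact hs.contDiff_convolution_left _ hρ hw.locallyIntegrable

lemma refl_contDiff {ρ : E → ℝ} {n : ℕ∞ω} (hρ : ContDiff ℝ n ρ) (x : E) :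
    ContDiff ℝ n (fun t => ρ (x - t)) := hρ.comp (contDiff_const.sub contDiff_id)

lemma refl_supp {ρ : E → ℝ} (hs : HasCompactSupport ρ) (x : E) :
    HasCompactSupport (fun t => ρ (x - t)) :=
  hs.comp_homeomorph (Homeomorph.subLeft x)

lemma refl_pd {ρ : E → ℝ} (hρ : ContDiff ℝ 1 ρ) (x e t : E) :
    pd e (fun t => ρ (x - t)) t = - pd e ρ (x - t) := by
  unfold pd
  have h : HasFDerivAt (fun t : E => x - t) (-(ContinuousLinearMap.id ℝ E)) t :=
    (hasFDerivAt_id t).const_sub x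
  have := ((hρ.differentiable one_ne_zero (x - t)).hasFDerivAt.comp t h).fderiv
  have h2 : (fun t => ρ (x - t)) = ρ ∘ (fun t : E => x - t) := rfl
  rw [h2, this]; simp

lemma mol_pd {ρ w : E → ℝ} (hρ : ContDiff ℝ 1 ρ) (hs : HasCompactSupport ρ)
    (hw : Continuous w) (e x : E) : pd e (mol ρ w) x = ∫ t, pd e ρ (x - t) * w t := by
  have h := hs.hasFDerivAt_convolution_left (ContinuousLinearMap.lsmul ℝ ℝ) hρ
    (hw.locallyIntegrable (μ := (volume : Measure E))) x
  rw [← mol_eq] at h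
  unfold pd
  rw [h.fderiv, convolution_eq_swap, ContinuousLinearMap.integral_apply]
  · rfl
  · have := (hs.fderiv (𝕜 := ℝ)).convolutionExists_left
      ((ContinuousLinearMap.lsmul ℝ ℝ).precompL E) (hρ.continuous_fderiv one_ne_zero)
      (hw.locallyIntegrable (μ := (volume : Measure E))) x
    exact this.integrable_swap

lemma mol_pd' {ρ w : E → ℝ} (hρ : ContDiff ℝ 1 ρ) (hs : HasCompactSupport ρ)
    (hw : ContDiff ℝ 1 w) (e : E) : pd e (mol ρ w) = mol ρ (pd e w) := by
  ext x
  rw [mol_pd hρ hs hw.continuous]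
  unfold mol
  rw [ibp (refl_contDiff hρ x) hw (refl_supp hs x), ← integral_neg]
  congr 1; ext t
  rw [refl_pd hρ]; ring

/-- Locally bounded pointwise convergence. -/
def LC (a : ℕ → E → ℝ) (b : E → ℝ) : Prop :=
  (∀ n, Continuous (a n)) ∧ (∀ x, Tendsto (fun n => a n x) atTop (nhds (b x))) ∧
  ∀ K : Set E, IsCompact K → ∃ M : ℝ, ∀ n, ∀ x ∈ K, |a n x| ≤ M

lemma LC.mul {a a' : ℕ → E → ℝ} {b b' : E → ℝ} (h : LC a b) (h' : LC a' b') :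
    LC (fun n x => a n x * a' n x) (fun x => b x * b' x) := by
  refine ⟨fun n => (h.1 n).mul (h'.1 n), fun x => (h.2.1 x).mul (h'.2.1 x), fun K hK => ?_⟩
  obtain ⟨M, hM⟩ := h.2.2 K hK
  obtain ⟨M', hM'⟩ := h'.2.2 K hK
  refine ⟨M * M', fun n x hx => ?_⟩
  rw [abs_mul]
  exact mul_le_mul (hM n x hx) (hM' n x hx) (abs_nonneg _) ((abs_nonneg _).trans (hM n x hx))

lemma LC.lim {a : ℕ → E → ℝ} {b : E → ℝ} (h : LC a b) {θ : E → ℝ} (hθ : Continuous θ)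
    (hs : HasCompactSupport θ) :
    Tendsto (fun n => ∫ x, θ x * a n x) atTop (nhds (∫ x, θ x * b x)) := by
  obtain ⟨M, hM⟩ := h.2.2 _ hs
  refine tendsto_integral_of_dominated_convergence (fun x => |θ x| * M) ?_ ?_ ?_ ?_
  · exact fun n => (hθ.mul (h.1 n)).aestronglyMeasurable
  · exact (hθ.abs.integrable_of_hasCompactSupport hs.abs).mul_const M
  · refine fun n => Eventually.of_forall fun x => ?_
    rw [Real.norm_eq_abs, abs_mul]
    by_cases hx : x ∈ tsupport θ
    · exact mul_le_mul_of_nonneg_left (hM n x hx) (abs_nonneg _)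
    · simp [image_eq_zero_of_notMem_tsupport hx]
  · exact Eventually.of_forall fun x => (h.2.1 x).const_mul _

/-- Bump functions. -/
def bmp (n : ℕ) : ContDiffBump (0 : E) where
  rIn := 1 / (2 * ((n : ℝ) + 1))
  rOut := 1 / ((n : ℝ) + 1)
  rIn_pos := by positivity
  rIn_lt_rOut := by
    apply one_div_lt_one_div_of_lt
    · positivity
    · have : (0:ℝ) ≤ n := by positivity
      linarith

/-- Mollifiers. -/
def rho (n : ℕ) : E → ℝ := (bmp (E := E) n).normed volume

lemma rho_smooth (n : ℕ) : ContDiff ℝ ∞ (rho (E := E) n) := (bmp n).contDiff_normed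
lemma rho_supp (n : ℕ) : HasCompactSupport (rho (E := E) n) := (bmp n).hasCompactSupport_normed

lemma mol_LC {w : E → ℝ} (hw : Continuous w) : LC (fun n => mol (rho n) w) w := by
  refine ⟨fun n => (mol_contDiff (rho_smooth n) (rho_supp n) hw).continuous, fun x => ?_,
    fun K hK => ?_⟩
  · simp only [mol_eq]
    refine ContDiffBump.convolution_tendsto_right_of_continuous (φ := bmp) ?_ hw x
    exact tendsto_one_div_add_atTop_nhds_zero_nat
  · have hK1 : IsCompact (Metric.cthickening 1 K) := hK.cthickening
    obtain ⟨M, hM⟩ := hK1.exists_bound_of_continuousOn hw.continuousOn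
    refine ⟨3 * M, fun n x hx => ?_⟩
    have hx0 : ‖w x‖ ≤ M := hM x (Metric.self_subset_cthickening K hx)
    have : dist (mol (rho n) w x) (w x) ≤ 2 * M := by
      rw [mol_eq]
      refine (bmp n).dist_normed_convolution_le hw.aestronglyMeasurable fun y hy => ?_
      have hy1 : dist y x ≤ 1 := by
        refine (Metric.mem_ball.1 hy).le.trans ?_
        show 1 / ((n:ℝ) + 1) ≤ 1
        rw [div_le_one (by positivity)]
        linarith [(Nat.cast_nonneg n : (0:ℝ) ≤ n)]
      have := hM y (Metric.mem_cthickening_of_dist_le y x 1 K hx hy1)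
      rw [dist_eq_norm]
      linarith [norm_sub_le (w y) (w x)]
    rw [Real.dist_eq] at this
    rw [Real.norm_eq_abs] at hx0
    have := abs_add_le (mol (rho n) w x - w x) (w x)
    rw [sub_add_cancel] at this
    linarith

lemma core {ι : Type*} [Fintype ι] (e : ι → E) {u g : E → ℝ} (hu : ContDiff ℝ 1 u)
    (hg : Continuous g)
    (hweak : ∀ φ : E → ℝ, ContDiff ℝ ∞ φ → HasCompactSupport φ →
      ∑ i, ∫ x, pd (e i) u x * pd (e i) φ x = ∫ x, g x * φ x)
    {ψ : E → ℝ} (hψ : ContDiff ℝ 1 ψ) (hs : HasCompactSupport ψ) (b : E) :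
    - ∫ x, ψ x * (pd b u x * g x) =
      ∑ i, (- (∫ x, pd (e i) ψ x * (pd b u x * pd (e i) u x))
        + 1 / 2 * ∫ x, pd b ψ x * (pd (e i) u x * pd (e i) u x)) := by
  have hρ1 : ∀ n, ContDiff ℝ 1 (rho (E := E) n) := fun n => (rho_smooth n).of_le (by simp)
  have hpd : ∀ n a, pd a (mol (rho n) u) = mol (rho n) (pd a u) :=
    fun n a => mol_pd' (hρ1 n) (rho_supp n) hu a
  have hlap : ∀ n x, ∑ i, pd (e i) (pd (e i) (mol (rho n) u)) x = - mol (rho n) g x := by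
    intro n x
    have h := hweak (fun t => rho n (x - t)) (refl_contDiff (rho_smooth n) x)
      (refl_supp (rho_supp n) x)
    have h2 : mol (rho n) g x = ∫ t, g t * rho n (x - t) := by
      unfold mol; congr 1; ext t; ring
    rw [h2, ← h, ← Finset.sum_neg_distrib]
    refine Finset.sum_congr rfl fun i _ => ?_
    rw [hpd, mol_pd (hρ1 n) (rho_supp n) (pd_cont hu _), ← integral_neg]
    congr 1; ext t
    rw [refl_pd (hρ1 n)]; ring
  have hn : ∀ n, - ∫ x, ψ x * (mol (rho n) (pd b u) x * mol (rho n) g x) =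
      ∑ i, (- (∫ x, pd (e i) ψ x * (mol (rho n) (pd b u) x * mol (rho n) (pd (e i) u) x))
        + 1 / 2 * ∫ x, pd b ψ x * (mol (rho n) (pd (e i) u) x * mol (rho n) (pd (e i) u) x)) := by
    intro n
    have hv : ContDiff ℝ 2 (mol (rho n) u) :=
      (mol_contDiff (rho_smooth n) (rho_supp n) hu.continuous).of_le (WithTop.coe_le_coe.2 (le_top : (2 : ℕ∞) ≤ ⊤))
    have hst : ∀ i, _ := fun i => stress hv hψ hs (e i) b
    simp only [← hpd]
    rw [← Finset.sum_congr rfl (fun i _ => hst i), ← integral_finsetSum, ← integral_neg]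
    · congr 1; ext x
      rw [← Finset.mul_sum, ← Finset.mul_sum, hlap]; ring
    · intro i _
      exact int_of hψ.continuous ((pd_cont (hv.of_le (by norm_num)) b).mul
        (pd_cont (pd_contDiff hv _) _)) hs
  have hL : ∀ a, LC (fun n => mol (rho n) (pd a u)) (pd a u) := fun a => mol_LC (pd_cont hu a)
  have l1 := (((hL b).mul (mol_LC hg)).lim hψ.continuous hs).neg
  have l2 : Tendsto (fun n => ∑ i, (- (∫ x, pd (e i) ψ x *
        (mol (rho n) (pd b u) x * mol (rho n) (pd (e i) u) x))
        + 1 / 2 * ∫ x, pd b ψ x * (mol (rho n) (pd (e i) u) x * mol (rho n) (pd (e i) u) x)))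
        atTop (nhds _) := tendsto_finsetSum _ fun i _ =>
    ((((hL b).mul (hL (e i))).lim (pd_cont hψ _) (pd_supp hs _)).neg).add
      ((((hL (e i)).mul (hL (e i))).lim (pd_cont hψ b) (pd_supp hs b)).const_mul (1/2))
  simp only [hn] at l1
  exact tendsto_nhds_unique l1 l2

lemma scale_lim {a w : E → ℝ} (ha : Continuous a) (hs : HasCompactSupport a)
    (hw : Integrable w) :
    Tendsto (fun n : ℕ => ∫ x, a ((1 / ((n:ℝ) + 1)) • x) * w x) atTop
      (nhds (a 0 * ∫ x, w x)) := by
  obtain ⟨M, hM⟩ := hs.exists_bound_of_continuous ha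
  rw [← integral_const_mul]
  refine tendsto_integral_of_dominated_convergence (fun x => M * |w x|) ?_ ?_ ?_ ?_
  · exact fun n => ((ha.comp (continuous_const_smul _)).aestronglyMeasurable).mul
      hw.aestronglyMeasurable
  · exact hw.abs.const_mul M
  · refine fun n => Eventually.of_forall fun x => ?_
    rw [norm_mul, Real.norm_eq_abs (w x)]
    exact mul_le_mul_of_nonneg_right (hM _) (abs_nonneg _)
  · refine Eventually.of_forall fun x => ?_
    refine Tendsto.mul_const _ ?_
    have h1 : Tendsto (fun n : ℕ => (1 / ((n:ℝ) + 1)) • x) atTop (nhds ((0:ℝ) • x)) :=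
      tendsto_one_div_add_atTop_nhds_zero_nat.smul_const x
    rw [zero_smul] at h1
    exact (ha.tendsto 0).comp h1

lemma pd_scale {ψ : E → ℝ} (hψ : ContDiff ℝ 1 ψ) {c : ℝ} (hc : c ≠ 0) (e x : E) :
    pd e (fun x => c⁻¹ * ψ (c • x)) x = pd e ψ (c • x) := by
  unfold pd
  have h : HasFDerivAt (fun t : E => c • t) (c • (ContinuousLinearMap.id ℝ E)) x :=
    (hasFDerivAt_id x).const_smul c
  have h1 := ((hψ.differentiable one_ne_zero (c • x)).hasFDerivAt.comp x h).const_mul c⁻¹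
  have := h1.fderiv
  simp only [Function.comp_apply] at this
  rw [this]; simp [hc]

lemma core2 {ι : Type*} [Fintype ι] (e : ι → E) {u g G : E → ℝ} (hu : ContDiff ℝ 1 u)
    (hg : Continuous g) (hG : ContDiff ℝ 1 G)
    (hGd : ∀ b x, pd b G x = pd b u x * g x)
    (hweak : ∀ φ : E → ℝ, ContDiff ℝ ∞ φ → HasCompactSupport φ →
      ∑ i, ∫ x, pd (e i) u x * pd (e i) φ x = ∫ x, g x * φ x)
    (hGi : Integrable G) (hui : ∀ a b, Integrable (fun x => pd a u x * pd b u x))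
    {ψ : E → ℝ} (hψ : ContDiff ℝ 1 ψ) (hs : HasCompactSupport ψ) (b : E) :
    pd b ψ 0 * ∫ x, G x =
      ∑ i, (- (pd (e i) ψ 0 * ∫ x, pd b u x * pd (e i) u x)
        + 1 / 2 * (pd b ψ 0 * ∫ x, pd (e i) u x * pd (e i) u x)) := by
  have hn : ∀ n : ℕ, ∫ x, pd b ψ ((1 / ((n:ℝ) + 1)) • x) * G x =
      ∑ i, (- (∫ x, pd (e i) ψ ((1 / ((n:ℝ) + 1)) • x) * (pd b u x * pd (e i) u x))
        + 1 / 2 * ∫ x, pd b ψ ((1 / ((n:ℝ) + 1)) • x) * (pd (e i) u x * pd (e i) u x)) := by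
    intro n
    set c : ℝ := 1 / ((n:ℝ) + 1) with hcdef
    have hc : c ≠ 0 := by positivity
    have hψc : ContDiff ℝ 1 (fun x => c⁻¹ * ψ (c • x)) :=
      contDiff_const.mul (hψ.comp (contDiff_const_smul c))
    have hsc : HasCompactSupport (fun x => c⁻¹ * ψ (c • x)) :=
      HasCompactSupport.mul_left (hs.comp_smul hc)
    have h := core e hu hg hweak hψc hsc b
    simp only [← hGd] at h
    rw [ibp hψc hG hsc b, neg_neg] at h
    simpa only [pd_scale hψ hc] using h
  have l1 := scale_lim (pd_cont hψ b) (pd_supp hs b) hGi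
  simp only [hn] at l1
  have l2 := tendsto_finsetSum (Finset.univ : Finset ι) fun i _ =>
    ((scale_lim (pd_cont hψ (e i)) (pd_supp hs (e i)) (hui b (e i))).neg).add
      ((scale_lim (pd_cont hψ b) (pd_supp hs b) (hui (e i) (e i))).const_mul (1/2))
  exact tendsto_nhds_unique l1 l2

/-- A test function with prescribed gradient at the origin. -/
lemma exists_test (a : E) : ∃ ψ : E → ℝ, ContDiff ℝ 1 ψ ∧ HasCompactSupport ψ ∧
    ∀ e, pd e ψ 0 = ⟪a, e⟫ := by
  have h1 : ContDiff ℝ 1 (bmp (E := E) 0) := (bmp 0).contDiff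
  have h2 : ContDiff ℝ 1 (fun x : E => ⟪a, x⟫) := contDiff_const.inner ℝ contDiff_id
  refine ⟨fun x => bmp (E := E) 0 x * ⟪a, x⟫, h1.mul h2,
    (bmp (E := E) 0).hasCompactSupport.mul_right, fun e => ?_⟩
  rw [pd_mul h1 h2]
  have h3 : (bmp (E := E) 0) 0 = 1 := (bmp (E := E) 0).one_of_mem_closedBall (by simpa using (bmp 0).rIn_pos.le)
  have h4 : pd e (fun x : E => ⟪a, x⟫) 0 = ⟪a, e⟫ := by
    unfold pd
    exact congrArg (fun L => L e) (innerSL ℝ a).fderiv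
  rw [h3, h4]; simp

lemma inner_grad {v : E → ℝ} (x e : E) : ⟪gradient v x, e⟫ = pd e v x := by
  unfold pd
  rw [← toDual_gradient]; rfl

theorem final {ι : Type*} [Fintype ι] (B : OrthonormalBasis ι ℝ E) {u g G : E → ℝ}
    (hu : ContDiff ℝ 1 u)
    (hg : Continuous g) (hG : ContDiff ℝ 1 G)
    (hGd : ∀ b x, pd b G x = pd b u x * g x)
    (hweak : ∀ φ : E → ℝ, ContDiff ℝ ∞ φ → HasCompactSupport φ →
      ∫ x, ⟪gradient u x, gradient φ x⟫ = ∫ x, g x * φ x)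
    (hGi : Integrable G) (hgrad : MemLp (fun x => ‖gradient u x‖) 2 (volume : Measure E)) :
    (Fintype.card ι : ℝ) * ∫ x, G x =
      ((Fintype.card ι : ℝ) / 2 - 1) * ∫ x, ‖gradient u x‖ ^ 2 := by
  classical
  have hin : ∀ v w : E → ℝ, ∀ x, ⟪gradient v x, gradient w x⟫ = ∑ i, pd (B i) v x * pd (B i) w x := by
    intro v w x
    rw [← B.sum_inner_mul_inner]
    refine Finset.sum_congr rfl fun i _ => ?_
    rw [inner_grad, real_inner_comm, inner_grad]
  have hpl : ∀ a, MemLp (pd a u) 2 (volume : Measure E) := by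
    intro a
    refine (hgrad.const_mul ‖a‖).mono (pd_cont hu a).aestronglyMeasurable
      (Eventually.of_forall fun x => ?_)
    rw [← inner_grad]
    refine (norm_inner_le_norm _ _).trans ?_
    rw [norm_mul, norm_norm, norm_norm, mul_comm]
  have hui : ∀ a b, Integrable (fun x => pd a u x * pd b u x) :=
    fun a b => (hpl a).integrable_mul (hpl b)
  have hweak' : ∀ φ : E → ℝ, ContDiff ℝ ∞ φ → HasCompactSupport φ →
      ∑ i, ∫ x, pd (B i) u x * pd (B i) φ x = ∫ x, g x * φ x := by
    intro φ h1 h2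
    rw [← hweak φ h1 h2, ← integral_finsetSum]
    · simp only [hin]
    · intro i _
      have := int_of (pd_cont (h1.of_le (by simp)) (B i)) (pd_cont hu (B i)) (pd_supp h2 (B i))
      simpa only [mul_comm] using this
  have hsq : ∫ x, ‖gradient u x‖ ^ 2 = ∑ i, ∫ x, pd (B i) u x * pd (B i) u x := by
    rw [← integral_finsetSum _ (fun i _ => hui _ _)]
    congr 1; ext x
    rw [← hin, real_inner_self_eq_norm_sq]
  have hj : ∀ j, ∫ x, G x = - (∫ x, pd (B j) u x * pd (B j) u x)
      + 1 / 2 * ∫ x, ‖gradient u x‖ ^ 2 := by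
    intro j
    obtain ⟨ψ, h1, h2, h3⟩ := exists_test (B j)
    have h := core2 (fun i => B i) hu hg hG hGd hweak' hGi hui h1 h2 (B j)
    simp only [h3, orthonormal_iff_ite.1 B.orthonormal] at h
    rw [Finset.sum_add_distrib, Finset.sum_neg_distrib, ← Finset.mul_sum] at h
    simpa [← hsq] using h
  have hsum := Finset.sum_congr rfl (fun j (_ : j ∈ Finset.univ) => hj j)
  rw [Finset.sum_add_distrib, Finset.sum_neg_distrib, ← hsq] at hsum
  simp only [Finset.sum_const, Finset.card_univ, nsmul_eq_mul] at hsum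
  rw [hsum]; ring

end Poho

/-- **Lemma 2.1(i): Pohozaev identity.**
Every weak solution `u` of `−Δu + m u = f(u)` on `ℝ^N`, `N ≥ 3`, with `u, |∇u| ∈ L²` and
`F(u) ∈ L¹`, under continuity, vanishing at `0`, and subcritical growth of `f`, satisfies
`((N−2)/2)∫|∇u|² + (Nm/2)∫u² − N∫F(u) = 0`. -/
theorem pohozaev_identity (N : ℕ) (hN : 3 ≤ N) (m : ℝ) (hm : 0 < m)
    (f : ℝ → ℝ) (hf_cont : Continuous f) (hf0 : f 0 = 0)
    (hf_zero : Tendsto (fun s => f s / s) (nhdsWithin 0 {(0:ℝ)}ᶜ) (nhds 0))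
    (C : ℝ) (hC : 0 < C)
    (hf_growth : ∀ s : ℝ, |f s| ≤ C * (|s| + |s| ^ (((N : ℝ) + 2) / ((N : ℝ) - 2))))
    (u : EuclideanSpace ℝ (Fin N) → ℝ)
    (hu_C1 : ContDiff ℝ 1 u)
    (hu_L2 : MemLp u 2 volume)
    (hgrad_L2 : MemLp (fun x => ‖gradient u x‖) 2 volume)
    (hFu_L1 : Integrable (fun x => primF f (u x)) volume)
    (hu_weak : ∀ φ : EuclideanSpace ℝ (Fin N) → ℝ, ContDiff ℝ (⊤ : ℕ∞) φ → HasCompactSupport φ →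
      (∫ x, ⟪gradient u x, gradient φ x⟫) + m * (∫ x, u x * φ x) = ∫ x, f (u x) * φ x) :
    ((N : ℝ) - 2) / 2 * (∫ x, ‖gradient u x‖ ^ 2)
      + (N : ℝ) * m / 2 * (∫ x, u x ^ 2)
      - (N : ℝ) * (∫ x, primF f (u x)) = 0 := by
  have hFd : ∀ s, HasDerivAt (primF f) (f s) s := fun s =>
    intervalIntegral.integral_hasDerivAt_right (hf_cont.intervalIntegrable _ _)
      (hf_cont.stronglyMeasurableAtFilter _ _) hf_cont.continuousAt
  have hHd : ∀ s, HasDerivAt (fun s => primF f s - m / 2 * s ^ 2) (f s - m * s) s := by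
    intro s
    have h := (hFd s).sub ((hasDerivAt_pow 2 s).const_mul (m / 2))
    have he : f s - m / 2 * (((2 : ℕ) : ℝ) * s ^ (2 - 1)) = f s - m * s := by
      push_cast; simp only [Nat.add_one_sub_one, pow_one]; ring
    rw [he] at h
    exact h
  have hHC : ContDiff ℝ 1 (fun s => primF f s - m / 2 * s ^ 2) := by
    rw [contDiff_one_iff_deriv]
    refine ⟨fun s => (hHd s).differentiableAt, ?_⟩
    have : deriv (fun s => primF f s - m / 2 * s ^ 2) = fun s => f s - m * s :=
      funext fun s => (hHd s).deriv
    rw [this]; fun_prop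
  have hc := hu_C1.continuous
  have hu2 : Integrable (fun x => u x ^ 2) volume := hu_L2.integrable_sq
  have key := Poho.final (EuclideanSpace.basisFun (Fin N) ℝ) (u := u)
    (g := fun x => f (u x) - m * u x) (G := fun x => primF f (u x) - m / 2 * u x ^ 2)
    hu_C1 (by fun_prop) (hHC.comp hu_C1) ?_ ?_ (hFu_L1.sub (hu2.const_mul _)) hgrad_L2
  · rw [integral_sub hFu_L1 (hu2.const_mul _), integral_const_mul, Fintype.card_fin] at key
    linarith
  · intro b x
    unfold Poho.pd
    have h := ((hHd (u x)).comp_hasFDerivAt x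
      (hu_C1.differentiable one_ne_zero x).hasFDerivAt).fderiv
    have h2 : (fun x => primF f (u x) - m / 2 * u x ^ 2) =
      (fun s => primF f s - m / 2 * s ^ 2) ∘ u := rfl
    rw [h2, h]
    simp [mul_comm]
  · intro φ h1 h2
    have h := hu_weak φ h1 h2
    have i1 : Integrable (fun x => f (u x) * φ x) volume :=
      ((hf_cont.comp hc).mul h1.continuous).integrable_of_hasCompactSupport h2.mul_left
    have i2 : Integrable (fun x => u x * φ x) volume :=
      (hc.mul h1.continuous).integrable_of_hasCompactSupport h2.mul_left
    have : ∫ x, (f (u x) - m * u x) * φ x = (∫ x, f (u x) * φ x) - m * ∫ x, u x * φ x := by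
      rw [← integral_const_mul, ← integral_sub i1 (i2.const_mul m)]
      congr 1; ext x; ring
    rw [this]; linarith
end
end

section
/- Let N ≥ 3, p ∈ (2, 2N/(N−2)), and C₁, D > 0. There exists ρ₂ > 0, depending only on N, p, C₁, and D, with the following property: for every continuous f : ℝ → ℝ satisfying |f(s)s| ≤ (1/4)s² + C₁|s|^p for all s ∈ ℝ, and every continuously differentiable w : ℝ^N → ℝ with w, |∇w| ∈ L²(ℝ^N) satisfying ∫(|∇w|² + w²) ≤ D² and ∫(|∇w|² + w²) ≤ ∫|f(w)w|, either w = 0 almost everywhere or (∫ w²)^{1/2} ≥ ρ₂. -/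
open MeasureTheory Filter Set Real

noncomputable section

lemma sobolev_aux (N : ℕ) (hN : 3 ≤ N) (q : NNReal)
    (hq : (q : ℝ)⁻¹ = (2 : ℝ)⁻¹ - (N : ℝ)⁻¹) :
    ∃ M : NNReal, ∀ w : EuclideanSpace ℝ (Fin N) → ℝ, ContDiff ℝ 1 w →
      eLpNorm w q volume ≤ M * (eLpNorm (fderiv ℝ w) 2 volume + eLpNorm w 2 volume) := by
  let φ : ContDiffBump (0 : EuclideanSpace ℝ (Fin N)) := ⟨1, 2, one_pos, one_lt_two⟩
  have hφ1 : ContDiff ℝ 1 φ := φ.contDiff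
  obtain ⟨K, hK⟩ := (φ.hasCompactSupport.fderiv ℝ).exists_bound_of_continuous
    (hφ1.continuous_fderiv one_ne_zero)
  have hK0 : 0 ≤ K := (norm_nonneg _).trans (hK 0)
  let C := eLpNormLESNormFDerivOfEqInnerConst
    (volume : Measure (EuclideanSpace ℝ (Fin N))) ((2 : NNReal) : ℝ)
  refine ⟨C * (1 + K.toNNReal), fun w hw => ?_⟩
  let u : ℕ → EuclideanSpace ℝ (Fin N) → ℝ := fun n x => φ (((n : ℝ) + 1)⁻¹ • x) * w x
  have hu : ∀ n, ContDiff ℝ 1 (u n) := fun n =>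
    (hφ1.comp (contDiff_const_smul _)).mul hw
  have hc : ∀ n, HasCompactSupport (u n) := fun n => by
    have h1 : ((n : ℝ) + 1)⁻¹ ≠ 0 := by positivity
    exact (φ.hasCompactSupport.comp_smul h1).mul_right
  have hder : ∀ n x, ‖fderiv ℝ (u n) x‖ ≤ ‖fderiv ℝ w x‖ + K * ‖w x‖ := by
    intro n x
    have hc1 : |((n : ℝ) + 1)⁻¹| ≤ 1 := by
      rw [abs_of_pos (by positivity)]
      exact inv_le_one_of_one_le₀ (by linarith [n.cast_nonneg (α := ℝ)])
    have h1 : HasFDerivAt (fun x => φ (((n : ℝ) + 1)⁻¹ • x))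
        (((n : ℝ) + 1)⁻¹ • fderiv ℝ φ (((n : ℝ) + 1)⁻¹ • x)) x := by
      have h2 := ((hφ1.differentiable one_ne_zero) (((n : ℝ) + 1)⁻¹ • x)).hasFDerivAt.comp x
        ((hasFDerivAt_id x).const_smul ((n : ℝ) + 1)⁻¹)
      refine h2.congr_fderiv ?_
      ext v
      simp
    have h3 := h1.mul (hw.differentiable one_ne_zero x).hasFDerivAt
    have h4 : fderiv ℝ (u n) x = _ := h3.fderiv
    rw [h4]
    refine (norm_add_le _ _).trans ?_
    rw [norm_smul, norm_smul, norm_smul]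
    have h5 : ‖φ (((n : ℝ) + 1)⁻¹ • x)‖ ≤ 1 := by
      rw [Real.norm_eq_abs, abs_of_nonneg φ.nonneg]
      exact φ.le_one
    have h6 : ‖((n : ℝ) + 1)⁻¹‖ * ‖fderiv ℝ φ (((n : ℝ) + 1)⁻¹ • x)‖ ≤ 1 * K :=
      mul_le_mul hc1 (hK _) (norm_nonneg _) zero_le_one
    have h7 := mul_le_mul_of_nonneg_left h6 (norm_nonneg (w x))
    have h8 := mul_le_mul_of_nonneg_right h5 (norm_nonneg (fderiv ℝ w x))
    linarith
  have hbd : ∀ n, eLpNorm (u n) q volume ≤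
      (C * (1 + K.toNNReal) : NNReal) * (eLpNorm (fderiv ℝ w) 2 volume + eLpNorm w 2 volume) := by
    intro n
    have h1 := eLpNorm_le_eLpNorm_fderiv_of_eq_inner
      (volume : Measure (EuclideanSpace ℝ (Fin N))) (hu n) (hc n) (p := 2) (p' := q)
      (by norm_num) (by simp; omega) (by simpa using hq)
    refine h1.trans ?_
    rw [ENNReal.coe_mul, mul_assoc]
    refine mul_le_mul_right ?_ _
    have h2 : eLpNorm (fderiv ℝ (u n)) 2 volume ≤
        eLpNorm ((fun x => ‖fderiv ℝ w x‖) + K • (fun x => ‖w x‖)) 2 volume :=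
      eLpNorm_mono_real (fun x => by simpa using hder n x)
    have h3 := eLpNorm_add_le (p := 2) (μ := (volume : Measure (EuclideanSpace ℝ (Fin N))))
      (f := fun x => ‖fderiv ℝ w x‖) (g := K • (fun x => ‖w x‖))
      (hw.continuous_fderiv one_ne_zero).norm.aestronglyMeasurable
      (hw.continuous.norm.const_smul K).aestronglyMeasurable (by norm_num)
    rw [eLpNorm_const_smul, eLpNorm_norm, eLpNorm_norm] at h3
    refine (h2.trans h3).trans ?_
    have hKe : ‖K‖ₑ = (K.toNNReal : ENNReal) := by
      rw [Real.enorm_eq_ofReal hK0]; rfl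
    rw [hKe, ENNReal.coe_add, ENNReal.coe_one, add_mul, one_mul, mul_add]
    refine add_le_add le_self_add le_add_self
  have hlim := Lp.eLpNorm_lim_le_liminf_eLpNorm (p := (q : ENNReal)) (f := u)
    (μ := (volume : Measure (EuclideanSpace ℝ (Fin N))))
    (fun n => (hu n).continuous.aestronglyMeasurable) w (Eventually.of_forall fun x => by
      refine tendsto_const_nhds.congr' ?_
      filter_upwards [eventually_ge_atTop ⌈‖x‖⌉₊] with n hn
      have h1 : ‖x‖ ≤ n := (Nat.le_ceil _).trans (by exact_mod_cast hn)
      have h2 : φ (((n : ℝ) + 1)⁻¹ • x) = 1 := by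
        apply φ.one_of_mem_closedBall
        rw [mem_closedBall_zero_iff, norm_smul, Real.norm_eq_abs, abs_of_pos (by positivity)]
        change _ ≤ (1 : ℝ)
        rw [inv_mul_le_one₀ (by positivity)]
        linarith
      simp [u, h2])
  refine hlim.trans ?_
  refine (liminf_le_liminf (Eventually.of_forall hbd)).trans ?_
  rw [liminf_const]

lemma eLpNorm_two_le {α : Type*} [MeasurableSpace α] {μ : Measure α} {g : α → ℝ}
    (hg : MemLp g 2 μ) {E : ℝ} (h : ∫ x, g x ^ 2 ∂μ ≤ E) :
    eLpNorm g 2 μ ≤ ENNReal.ofReal (√E) := by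
  rw [hg.eLpNorm_eq_integral_rpow_norm (by norm_num) (by norm_num)]
  apply ENNReal.ofReal_le_ofReal
  simp only [ENNReal.toReal_ofNat, Real.rpow_two, Real.norm_eq_abs, sq_abs]
  rw [← one_div, ← Real.sqrt_eq_rpow]
  exact Real.sqrt_le_sqrt h

lemma interp_aux {α : Type*} [MeasurableSpace α] {μ : Measure α} {w : α → ℝ}
    (hw : MemLp w 2 μ) (q : NNReal) (hq0 : q ≠ 0) {p a b S : ℝ} (ha : 0 ≤ a) (hb : 0 ≤ b)
    (hab : a + b = 1) (hp : p = 2 * a + q * b) (hp0 : 0 ≤ p) (hS : 0 ≤ S)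
    (h : eLpNorm w q μ ≤ ENNReal.ofReal S) :
    Integrable (fun x => |w x| ^ p) μ ∧
      ∫ x, |w x| ^ p ∂μ ≤ (∫ x, w x ^ 2 ∂μ) ^ a * S ^ (q * b : ℝ) := by
  have hm : AEMeasurable (fun x => ‖w x‖ₑ) μ := hw.1.enorm
  have h1 : ∫⁻ x, ‖w x‖ₑ ^ (q : ℝ) ∂μ ≤ ENNReal.ofReal S ^ (q : ℝ) := by
    rw [← eLpNorm_nnreal_pow_eq_lintegral hq0]
    exact ENNReal.rpow_le_rpow h q.2
  have h2 : ∫⁻ x, ‖w x‖ₑ ^ (2 : ℝ) ∂μ = ENNReal.ofReal (∫ x, w x ^ 2 ∂μ) := by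
    rw [ofReal_integral_eq_lintegral_ofReal hw.integrable_sq
      (Eventually.of_forall fun x => sq_nonneg _)]
    congr 1; ext x
    rw [← sq_abs, ENNReal.ofReal_pow (abs_nonneg _), ← Real.enorm_eq_ofReal_abs]
    norm_num
  have hI : 0 ≤ ∫ x, w x ^ 2 ∂μ := integral_nonneg fun x => sq_nonneg _
  have h3 : ∫⁻ x, ENNReal.ofReal (|w x| ^ p) ∂μ ≤
      ENNReal.ofReal ((∫ x, w x ^ 2 ∂μ) ^ a * S ^ (q * b : ℝ)) := by
    calc ∫⁻ x, ENNReal.ofReal (|w x| ^ p) ∂μ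
        = ∫⁻ x, (‖w x‖ₑ ^ (2 : ℝ)) ^ a * (‖w x‖ₑ ^ (q : ℝ)) ^ b ∂μ := by
          congr 1; ext x
          rw [← ENNReal.ofReal_rpow_of_nonneg (abs_nonneg _) hp0, ← Real.enorm_eq_ofReal_abs,
            ← ENNReal.rpow_mul, ← ENNReal.rpow_mul, ← ENNReal.rpow_add_of_nonneg _ _
              (by positivity) (by positivity), hp]
      _ ≤ _ := ENNReal.lintegral_mul_norm_pow_le (hm.pow_const _) (hm.pow_const _) ha hb hab
      _ ≤ ENNReal.ofReal (∫ x, w x ^ 2 ∂μ) ^ a * (ENNReal.ofReal S ^ (q : ℝ)) ^ b := by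
          rw [h2]
          exact mul_le_mul_right (ENNReal.rpow_le_rpow h1 hb) _
      _ = _ := by
          rw [← ENNReal.rpow_mul, ENNReal.ofReal_rpow_of_nonneg hI ha,
            ENNReal.ofReal_rpow_of_nonneg hS (by positivity), ENNReal.ofReal_mul (by positivity)]
  have hmeas : AEStronglyMeasurable (fun x => |w x| ^ p) μ :=
    (hw.1.norm.aemeasurable.pow_const p).aestronglyMeasurable
  have hnn : 0 ≤ᵐ[μ] (fun x => |w x| ^ p) := Eventually.of_forall fun x => by
    change 0 ≤ |w x| ^ p
    positivity
  refine ⟨⟨hmeas, ?_⟩, ?_⟩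
  · rw [hasFiniteIntegral_iff_ofReal hnn]
    exact h3.trans_lt ENNReal.ofReal_lt_top
  · rw [integral_eq_lintegral_of_nonneg_ae hnn hmeas]
    exact ENNReal.toReal_le_of_le_ofReal (by positivity) h3

lemma real_aux {t E a β c D C p K : ℝ} (ht : 0 < t) (htE : t ≤ E) (hED : E ≤ D ^ 2)
    (hca : c ≤ a) (hcp : c ≤ p / 2 - 1) (hβ : β = p / 2 - a) (hC : 0 < C) (hK : 0 < K)
    (h : E ≤ 1 / 4 * t + C * (t ^ a * (K * E ^ β))) :
    3 / 4 / (C * K * (D ^ 2) ^ (p / 2 - c - 1)) ≤ t ^ c := by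
  have hE : 0 < E := ht.trans_le htE
  have hD2 : 0 < D ^ 2 := hE.trans_le hED
  have h1 : t ^ a ≤ t ^ c * E ^ (a - c) := by
    calc t ^ a = t ^ c * t ^ (a - c) := by rw [← Real.rpow_add ht]; ring_nf
      _ ≤ _ := by
        gcongr
  have h2 : t ^ a * E ^ β ≤ t ^ c * (D ^ 2) ^ (p / 2 - c - 1) * E := by
    calc t ^ a * E ^ β ≤ t ^ c * E ^ (a - c) * E ^ β := by gcongr
      _ = t ^ c * E ^ (p / 2 - c - 1) * E := by
        have : E ^ (a - c) * E ^ β = E ^ (p / 2 - c - 1) * E := by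
          rw [← Real.rpow_add hE]
          nth_rewrite 3 [← Real.rpow_one E]
          rw [← Real.rpow_add hE, hβ]; ring_nf
        rw [mul_assoc, this, mul_assoc]
      _ ≤ _ := by
        gcongr
        linarith
  have h3 : 3 / 4 * E ≤ (C * K * (D ^ 2) ^ (p / 2 - c - 1) * t ^ c) * E := by
    have h4 := mul_le_mul_of_nonneg_left h2 (mul_pos hC hK).le
    nlinarith
  have h5 := le_of_mul_le_mul_right h3 hE
  rw [div_le_iff₀ (by positivity)]
  linarith

/-- **Lemma 2.6, case `N ≥ 3`.** Given `N ≥ 3`, `p ∈ (2, 2N/(N−2))` and constants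
`C₁, D > 0`, there is `ρ₂ > 0` depending only on `N, p, C₁, D` such that: for every continuous
`f` with `|f(s)s| ≤ (1/4)s² + C₁|s|^p`, every `C¹` function `w` with `w, |∇w| ∈ L²(ℝ^N)`,
`∫(|∇w|² + w²) ≤ D²` and `∫(|∇w|² + w²) ≤ ∫|f(w)w|`, either `w = 0` a.e. or
`(∫w²)^{1/2} ≥ ρ₂`. -/
theorem lower_L2_bound (N : ℕ) (hN : 3 ≤ N) (p : ℝ)
    (hp : p ∈ Set.Ioo (2:ℝ) (2 * (N : ℝ) / ((N : ℝ) - 2)))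
    (C₁ D : ℝ) (hC₁ : 0 < C₁) (hD : 0 < D) :
    ∃ ρ₂ > (0:ℝ), ∀ f : ℝ → ℝ, Continuous f →
      (∀ s : ℝ, |f s * s| ≤ 1 / 4 * s ^ 2 + C₁ * |s| ^ p) →
      ∀ w : EuclideanSpace ℝ (Fin N) → ℝ, ContDiff ℝ 1 w →
        MemLp w 2 volume → MemLp (fun x => ‖gradient w x‖) 2 volume →
        (∫ x, ‖gradient w x‖ ^ 2 + w x ^ 2) ≤ D ^ 2 →
        (∫ x, ‖gradient w x‖ ^ 2 + w x ^ 2) ≤ (∫ x, |f (w x) * w x|) →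
        (w =ᵐ[volume] 0) ∨ ρ₂ ≤ Real.sqrt (∫ x, w x ^ 2) := by
  obtain ⟨hp2, hpq⟩ := hp
  have hN3 : (3 : ℝ) ≤ N := by exact_mod_cast hN
  have hN2 : (0 : ℝ) < (N : ℝ) - 2 := by linarith
  obtain ⟨q, hq⟩ : ∃ q : NNReal, (q : ℝ) = 2 * (N : ℝ) / ((N : ℝ) - 2) :=
    ⟨⟨2 * (N : ℝ) / ((N : ℝ) - 2), by positivity⟩, rfl⟩
  rw [← hq] at hpq
  obtain ⟨M, hM⟩ := sobolev_aux N hN q (by rw [hq]; field_simp)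
  set a : ℝ := (q - p) / (q - 2) with ha_def
  set b : ℝ := (p - 2) / (q - 2) with hb_def
  have hq2 : (0 : ℝ) < q - 2 := by linarith
  have ha : 0 < a := div_pos (by linarith) hq2
  have hb : 0 < b := div_pos (by linarith) hq2
  have hab : a + b = 1 := by rw [ha_def, hb_def]; field_simp; ring
  have hpab : p = 2 * a + q * b := by rw [ha_def, hb_def]; field_simp; ring
  have hq0 : q ≠ 0 := by
    rintro rfl
    norm_num at hq2
  set c : ℝ := min a (p / 2 - 1) with hc_def
  have hc : 0 < c := lt_min ha (by linarith)
  set K : ℝ := (2 * M + 1) with hK_def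
  have hK : 0 < K := by positivity
  set κ : ℝ := 3 / 4 / (C₁ * K ^ (q * b : ℝ) * (D ^ 2) ^ (p / 2 - c - 1)) with hκ_def
  have hκ : 0 < κ := by positivity
  refine ⟨√(κ ^ (1 / c)), by positivity, ?_⟩
  intro f _ hf w hw hw2 hg2 hED hEf
  set E := ∫ x, ‖gradient w x‖ ^ 2 + w x ^ 2 with hE_def
  set t := ∫ x, w x ^ 2 with ht_def
  have hgi := hg2.integrable_sq
  have hwi := hw2.integrable_sq
  have ht0 : 0 ≤ t := integral_nonneg fun x => sq_nonneg _
  have hEeq : E = (∫ x, ‖gradient w x‖ ^ 2) + t := integral_add hgi hwi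
  have hg0 : 0 ≤ ∫ x, ‖gradient w x‖ ^ 2 := integral_nonneg fun x => sq_nonneg _
  rcases ht0.eq_or_lt with h0 | htpos
  · left
    have h1 := (integral_eq_zero_iff_of_nonneg (fun x => sq_nonneg (w x)) hwi).1 h0.symm
    filter_upwards [h1] with x hx
    exact pow_eq_zero_iff (two_ne_zero) |>.1 hx
  right
  have hE0 : 0 ≤ E := by linarith
  have hgn : eLpNorm (fderiv ℝ w) 2 volume = eLpNorm (fun x => ‖gradient w x‖) 2 volume := by
    rw [← eLpNorm_norm]
    congr 1; ext x
    simp [gradient]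
  have hS : eLpNorm w q volume ≤ ENNReal.ofReal (K * √E) := by
    refine (hM w hw).trans ?_
    rw [hgn]
    have h1 := eLpNorm_two_le hg2 (E := E) (by linarith)
    have h2 := eLpNorm_two_le hw2 (E := E) (by linarith)
    refine (mul_le_mul_right (add_le_add h1 h2) _).trans ?_
    rw [← ENNReal.ofReal_add (by positivity) (by positivity), ← ENNReal.ofReal_coe_nnreal,
      ← ENNReal.ofReal_mul (by positivity)]
    apply ENNReal.ofReal_le_ofReal
    rw [hK_def]
    nlinarith [Real.sqrt_nonneg E]
  obtain ⟨hpi, hpb⟩ := interp_aux hw2 q hq0 ha.le hb.le hab hpab (by linarith)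
    (by positivity) hS
  have hfb : ∫ x, |f (w x) * w x| ≤ ∫ x, 1 / 4 * w x ^ 2 + C₁ * |w x| ^ p :=
    integral_mono_of_nonneg (Eventually.of_forall fun x => abs_nonneg _)
      ((hwi.const_mul _).add (hpi.const_mul _)) (Eventually.of_forall fun x => hf (w x))
  rw [integral_add (hwi.const_mul _) (hpi.const_mul _), integral_const_mul,
    integral_const_mul] at hfb
  have hpow : (K * √E) ^ (q * b : ℝ) = K ^ (q * b : ℝ) * E ^ (p / 2 - a) := by
    rw [Real.mul_rpow hK.le (Real.sqrt_nonneg _), Real.sqrt_eq_rpow, ← Real.rpow_mul hE0]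
    congr 2
    linarith
  rw [hpow] at hpb
  have hfin : κ ≤ t ^ c := real_aux htpos (by linarith) hED (min_le_left _ _) (min_le_right _ _)
    rfl hC₁ (by positivity) (hEf.trans (hfb.trans (by gcongr)))
  apply Real.sqrt_le_sqrt
  calc κ ^ (1 / c) ≤ (t ^ c) ^ (1 / c) := by gcongr
    _ = t := by rw [← Real.rpow_mul ht0, mul_one_div_cancel hc.ne', Real.rpow_one]
end
end
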